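/- Under Assumptions 1.1, 1.2 and 1.3, lim_{n→∞} ∇f(θ_n) = 0 almost surely on Λ = {sup_{n≥0} ‖θ_n‖ < ∞}. -/

import Mathlib

open MeasureTheory Filter

lemma aux_window (α γ : ℕ → ℝ) (hγs : ∀ n, γ (n+1) = γ n + α n)
    (hαdiv : Tendsto γ atTop atTop) (t : ℝ) (ht : 0 < t) (n : ℕ)
    (hsm : ∀ k, n ≤ k → α k ≤ t / 2) :
    ∃ k, n ≤ k ∧ t / 2 ≤ γ k - γ n ∧ γ k - γ n ≤ t := by
  have hex : ∃ j, t < γ (n + j) - γ n := by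
    obtain ⟨k, hk, hk'⟩ := ((hαdiv.eventually_gt_atTop (γ n + t)).and
      (eventually_ge_atTop n)).exists
    refine ⟨k - n, ?_⟩
    rw [Nat.add_sub_cancel' hk']
    linarith
  classical
  have h1 := Nat.find_spec hex
  set j := Nat.find hex with hj
  rcases Nat.eq_zero_or_pos j with h0 | h0
  · rw [h0] at h1
    simp at h1
    linarith
  · obtain ⟨i, hi⟩ : ∃ i, j = i + 1 := ⟨j - 1, by omega⟩
    have h2 := Nat.find_min hex (m := i) (by omega)
    rw [hi, ← add_assoc, hγs] at h1
    have := hsm (n + i) (by omega)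
    exact ⟨n + i, by omega, by linarith, by linarith⟩

lemma aux_potential (r : ℝ) (hr : 1 < r) (x : ℝ) (hx : 1 ≤ x) :
    (r - 1) / 2 * (2 : ℝ) ^ (-r) * x ^ (-r) + (x + 1/2) ^ (1 - r) ≤ x ^ (1 - r) := by
  obtain ⟨c, ⟨hc1, hc2⟩, hc⟩ := exists_hasDerivAt_eq_slope (fun y : ℝ => y ^ (1 - r))
    (fun y => (1 - r) * y ^ (1 - r - 1)) (show x < x + 1/2 by linarith)
    (by
      intro y hy
      exact (Real.continuousAt_rpow_const _ _ (Or.inl (by linarith [hy.1]))).continuousWithinAt)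
    (by
      intro y hy
      exact Real.hasDerivAt_rpow_const (Or.inl (by linarith [hy.1])))
  have h1 : (2 * x) ^ (-r) ≤ c ^ (-r) :=
    Real.rpow_le_rpow_of_nonpos (by linarith) (by linarith) (by linarith)
  rw [Real.mul_rpow (by norm_num) (by linarith)] at h1
  have e : (1 - r - 1) = -r := by ring
  simp only [e] at hc
  have e2 : x + 1/2 - x = 1/2 := by ring
  rw [e2] at hc
  have : (r - 1) * ((2:ℝ) ^ (-r) * x ^ (-r)) ≤ (r-1) * c ^ (-r) :=
    mul_le_mul_of_nonneg_left h1 (by linarith)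
  linarith

lemma aux_abel {E : Type*} [NormedAddCommGroup E] [NormedSpace ℝ E]
    (X Y : ℕ → E) (w : ℕ → ℝ) (n k : ℕ) (hnk : n ≤ k) (K : ℝ)
    (hw : ∀ i, n ≤ i → w (i+1) ≤ w i) (hw0 : ∀ i, n ≤ i → 0 ≤ w i)
    (hXY : ∀ i, n ≤ i → X (i+1) - X i = w i • (Y (i+1) - Y i))
    (hY : ∀ j, n ≤ j → j ≤ k → ‖Y j - Y n‖ ≤ K) :
    ‖X k - X n‖ ≤ K * w n := by
  have key : ∀ j, n ≤ j → j ≤ k → ‖X j - X n - w j • (Y j - Y n)‖ ≤ K * (w n - w j) := by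
    intro j hj
    induction j, hj using Nat.le_induction with
    | base => intro _; simp
    | succ j hj ih =>
      intro hjk
      have h1 := ih (by omega)
      have h2 := hY (j+1) (by omega) hjk
      have e : X (j+1) - X n - w (j+1) • (Y (j+1) - Y n)
          = (X j - X n - w j • (Y j - Y n)) + (w j - w (j+1)) • (Y (j+1) - Y n) := by
        have : X (j+1) = X j + w j • (Y (j+1) - Y j) := by rw [← hXY j hj]; abel
        rw [this]
        module
      rw [e]
      refine (norm_add_le _ _).trans ?_
      rw [norm_smul, Real.norm_of_nonneg (by linarith [hw j hj])]
      have := mul_le_mul_of_nonneg_left h2 (show 0 ≤ w j - w (j+1) by linarith [hw j hj])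
      linarith
  have h1 := key k hnk le_rfl
  have h2 := hY k hnk le_rfl
  have e : X k - X n = (X k - X n - w k • (Y k - Y n)) + w k • (Y k - Y n) := by abel
  rw [e]
  refine (norm_add_le _ _).trans ?_
  rw [norm_smul, Real.norm_of_nonneg (hw0 k hnk)]
  have := mul_le_mul_of_nonneg_left h2 (hw0 k hnk)
  linarith

lemma aux_cauchy {E : Type*} [NormedAddCommGroup E] [NormedSpace ℝ E]
    (α γ : ℕ → ℝ) (hαpos : ∀ n, 0 < α n) (hα0 : Tendsto α atTop (nhds 0))
    (hγs : ∀ n, γ (n+1) = γ n + α n)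
    (hαdiv : Tendsto γ atTop atTop) (r : ℝ) (hr : 1 < r) (X : ℕ → E) (K : ℝ) (hK : 0 ≤ K)
    (hX : ∀ᶠ n in atTop, ∀ k, n ≤ k → γ k - γ n ≤ 1 → ‖X k - X n‖ ≤ K * γ n ^ (-r)) :
    CauchySeq X := by
  have hmono : Monotone γ := monotone_nat_of_le_succ (fun n => by
    rw [hγs]; linarith [hαpos n])
  obtain ⟨N, hN⟩ := eventually_atTop.1 (hX.and ((hαdiv.eventually_ge_atTop 1).and
    (hα0.eventually_le_const (show (0:ℝ) < 1/2 by norm_num))))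
  have hpos : 0 < (r - 1) / 2 * (2 : ℝ) ^ (-r) := by
    have : (0:ℝ) < 2 ^ (-r) := by positivity
    have : 0 < r - 1 := by linarith
    positivity
  set c := (r - 1) / 2 * (2 : ℝ) ^ (-r) with hc
  have pot : ∀ x : ℝ, 1 ≤ x → K * x ^ (-r) + K / c * (x + 1/2) ^ (1 - r) ≤ K / c * x ^ (1 - r) := by
    intro x hx
    have h := mul_le_mul_of_nonneg_left (aux_potential r hr x hx) (show 0 ≤ K / c by positivity)
    rw [← hc] at h
    have e : K / c * (c * x ^ (-r) + (x + 1/2) ^ (1 - r))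
      = K * x ^ (-r) + K / c * (x + 1/2) ^ (1 - r) := by field_simp
    linarith
  have key : ∀ m n k, N ≤ n → n ≤ k → k - n ≤ m → ‖X k - X n‖ ≤ K / c * γ n ^ (1 - r) := by
    intro m
    induction m with
    | zero =>
      intro n k hn hk hm
      have : k = n := by omega
      subst this
      have := (hN k hn).2.1
      simp
      positivity
    | succ m ih =>
      intro n k hn hk hm
      have h1 := (hN n hn).2.1
      have hp := pot _ h1
      by_cases h : γ k - γ n ≤ 1
      · have := (hN n hn).1 k hk h
        have : 0 ≤ K / c * (γ n + 1/2) ^ (1 - r) := by positivity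
        linarith
      · obtain ⟨n', hn', hl, hu⟩ := aux_window α γ hγs hαdiv 1 one_pos n
          (fun k hk => (hN k (by omega)).2.2)
        have hne : n' ≠ n := by rintro rfl; norm_num at hl
        have hlt : n' < k := by
          by_contra hcon
          exact h ((sub_le_sub_right (hmono (not_lt.1 hcon)) _).trans hu)
        have h2 := ih n' k (by omega) hlt.le (by omega)
        have h3 := (hN n hn).1 n' hn' hu
        have h4 : γ n' ^ (1 - r) ≤ (γ n + 1/2) ^ (1 - r) :=
          Real.rpow_le_rpow_of_nonpos (by linarith) (by linarith) (by linarith)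
        have h5 := mul_le_mul_of_nonneg_left h4 (show 0 ≤ K / c by positivity)
        have h6 := norm_add_le (X k - X n') (X n' - X n)
        rw [sub_add_sub_cancel] at h6
        linarith
  rw [Metric.cauchySeq_iff']
  intro ε hε
  have ht : Tendsto (fun n => K / c * γ n ^ (1 - r)) atTop (nhds 0) := by
    have h := (tendsto_rpow_neg_atTop (show 0 < r - 1 by linarith)).comp hαdiv
    have := h.const_mul (K / c)
    simpa [Function.comp_def] using this
  obtain ⟨n, hn, hnN⟩ := ((ht.eventually_lt_const hε).and (eventually_ge_atTop N)).exists
  refine ⟨n, fun k hk => ?_⟩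
  rw [dist_eq_norm]
  exact (key _ n k hnN hk le_rfl).trans_lt hn

lemma aux_isup (n m : ℕ) (F : ℕ → ℝ) (hF : ∀ k, 0 ≤ F k) (k : ℕ) (hk : k ∈ Set.Ico n m) :
    F k ≤ ⨆ k ∈ Set.Ico n m, F k := by
  have hb : BddAbove (Set.range fun k => ⨆ (_ : k ∈ Set.Ico n m), F k) := by
    refine ⟨∑ k ∈ Finset.Ico n m, F k, ?_⟩
    rintro _ ⟨k, rfl⟩
    refine Real.iSup_le (fun h => ?_) (Finset.sum_nonneg fun i _ => hF i)
    exact Finset.single_le_sum (fun i _ => hF i) (by simpa using h)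
  refine le_trans ?_ (le_ciSup hb k)
  simp [hk.1, hk.2]

lemma aux_gap {E : Type*} (f : E → ℝ) (g : E → ℝ) (Q : Set E)
    (hLoj : ∀ b ∈ f '' Q,
      ∃ δ μ M : ℝ, δ ∈ Set.Ioc (0 : ℝ) 1 ∧ μ ∈ Set.Ioc (1 : ℝ) 2 ∧ 1 ≤ M ∧
        ∀ x ∈ Q, |f x - b| ≤ δ → |f x - b| ≤ M * g x ^ μ) (p q : ℝ) (hpq : p < q) :
    ∃ c, p < c ∧ c < q ∧ ∀ x ∈ Q, f x = c → g x ≠ 0 := by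
  by_contra! hcon
  obtain ⟨x, hx, hfx, hgx⟩ := hcon ((p+q)/2) (by linarith) (by linarith)
  obtain ⟨δ, μ, M, hδ, hμ, hM, h⟩ := hLoj _ ⟨x, hx, rfl⟩
  set η := min δ ((q - p)/4) with hη
  have h0 : 0 < η := lt_min hδ.1 (by linarith)
  have h1 : η ≤ δ := min_le_left _ _
  have h2 : η ≤ (q-p)/4 := min_le_right _ _
  obtain ⟨y, hy, hfy, hgy⟩ := hcon ((p+q)/2 + η) (by linarith) (by linarith)
  have e : f y - f x = η := by rw [hfy, hfx]; ring
  have := h y hy (by rw [e, abs_of_pos h0]; exact h1)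
  rw [e, abs_of_pos h0, hgy, Real.zero_rpow (by linarith [hμ.1])] at this
  linarith

lemma aux_descent {E : Type*} [NormedAddCommGroup E] [InnerProductSpace ℝ E] [CompleteSpace E]
    (f : E → ℝ) (hfd : Differentiable ℝ f) (Q : Set E) (hQ : Convex ℝ Q) (L : NNReal)
    (hL : LipschitzOnWith L (fun x => gradient f x) Q) (x y : E) (hx : x ∈ Q) (hy : y ∈ Q) :
    f y ≤ f x + inner ℝ (gradient f x) (y - x) + L * ‖y - x‖ ^ 2 := by
  have hseg : segment ℝ x y ⊆ Q := hQ.segment_subset hx hy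
  have h := Convex.norm_image_sub_le_of_norm_hasFDerivWithin_le' (f := f) (𝕜 := ℝ)
    (s := segment ℝ x y) (x := x) (y := y)
    (f' := fun z => InnerProductSpace.toDual ℝ E (gradient f z))
    (φ := InnerProductSpace.toDual ℝ E (gradient f x)) (C := L * ‖y - x‖)
    (fun z _ => (hfd z).hasGradientAt.hasFDerivAt.hasFDerivWithinAt)
    (by
      intro z hz
      rw [← map_sub, LinearIsometryEquiv.norm_map, ← dist_eq_norm]
      refine (hL.dist_le_mul z (hseg hz) x hx).trans ?_
      refine mul_le_mul_of_nonneg_left ?_ L.2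
      rw [dist_eq_norm]
      have := norm_sub_le_of_mem_segment hz
      exact this)
    (convex_segment x y) (left_mem_segment ℝ x y) (right_mem_segment ℝ x y)
  rw [InnerProductSpace.toDual_apply_apply, Real.norm_eq_abs] at h
  have := (abs_le.1 h).2
  nlinarith

lemma aux_core {E : Type*} [NormedAddCommGroup E] [InnerProductSpace ℝ E] [FiniteDimensional ℝ E]
    [CompleteSpace E]
    (f : E → ℝ) (hfd : Differentiable ℝ f)
    (hlip : LocallyLipschitz (fun x => gradient f x))
    (α γ : ℕ → ℝ) (hαpos : ∀ n, 0 < α n) (hα0 : Tendsto α atTop (nhds 0))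
    (hγs : ∀ n, γ (n+1) = γ n + α n) (hαdiv : Tendsto γ atTop atTop)
    (θ η : ℕ → E) (R : ℝ) (hθ : ∀ n, ‖θ n‖ ≤ R) (hη : ∀ n, ‖η n‖ ≤ R)
    (hrec : ∀ n, η (n+1) = η n - α n • gradient f (θ n))
    (hclose : Tendsto (fun n => ‖θ n - η n‖) atTop (nhds 0))
    (hgap : ∀ p q : ℝ, p < q → ∃ c, p < c ∧ c < q ∧
      ∀ x ∈ Metric.closedBall (0:E) R, f x = c → ‖gradient f x‖ ≠ 0) :
    Tendsto (fun n => gradient f (θ n)) atTop (nhds 0) := by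
  set Q := Metric.closedBall (0:E) R with hQdef
  have hQ : IsCompact Q := isCompact_closedBall _ _
  have hgc : Continuous (fun x => gradient f x) := hlip.continuous
  have hθQ : ∀ n, θ n ∈ Q := fun n => by simpa [hQdef] using hθ n
  have hηQ : ∀ n, η n ∈ Q := fun n => by simpa [hQdef] using hη n
  obtain ⟨L, hL⟩ := LocallyLipschitzOn.exists_lipschitzOnWith_of_compact hQ
    (hlip.locallyLipschitzOn (s := Q))
  obtain ⟨G, hG⟩ := hQ.exists_bound_of_continuousOn hgc.continuousOn
  have hG0 : 0 ≤ G := (norm_nonneg _).trans (hG _ (hθQ 0))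
  have hL0 : (0:ℝ) ≤ L := L.2
  have hLd : ∀ x ∈ Q, ∀ y ∈ Q, ‖gradient f x - gradient f y‖ ≤ L * ‖x - y‖ := by
    intro x hx y hy
    rw [← dist_eq_norm, ← dist_eq_norm]
    exact hL.dist_le_mul x hx y hy
  have hstep : ∀ n, ‖η (n+1) - η n‖ ≤ G * α n := by
    intro n
    rw [hrec, sub_sub_cancel_left, norm_neg, norm_smul, Real.norm_of_nonneg (hαpos n).le]
    have := mul_le_mul_of_nonneg_left (hG _ (hθQ n)) (hαpos n).le
    linarith
  set e : ℕ → ℝ := fun n => G * L * ‖θ n - η n‖ + L * G ^ 2 * α n with he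
  have he0 : Tendsto e atTop (nhds 0) := by
    have := (hclose.const_mul (G * L)).add (hα0.const_mul (L * G ^ 2))
    simpa [he] using this
  have hV : ∀ n, f (η (n+1)) ≤ f (η n) - α n * (‖gradient f (η n)‖ ^ 2 - e n) := by
    intro n
    have h1 := aux_descent f hfd Q (convex_closedBall _ _) L hL _ _ (hηQ n) (hηQ (n+1))
    have h2 : η (n+1) - η n = - (α n • gradient f (θ n)) := by rw [hrec]; abel
    have h3 : inner ℝ (gradient f (η n)) (η (n+1) - η n)
        = - (α n * (‖gradient f (η n)‖ ^ 2
          + inner ℝ (gradient f (η n)) (gradient f (θ n) - gradient f (η n)))) := by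
      rw [h2, inner_neg_right, inner_smul_right, inner_sub_right, real_inner_self_eq_norm_sq]
      ring
    have h4 : |inner ℝ (gradient f (η n)) (gradient f (θ n) - gradient f (η n))|
        ≤ G * (L * ‖θ n - η n‖) :=
      (abs_real_inner_le_norm _ _).trans (mul_le_mul (hG _ (hηQ n))
        (hLd _ (hθQ n) _ (hηQ n)) (norm_nonneg _) hG0)
    have h5 : ‖η (n+1) - η n‖ ^ 2 ≤ (G * α n) ^ 2 :=
      pow_le_pow_left₀ (norm_nonneg _) (hstep n) 2
    have h6 := mul_le_mul_of_nonneg_left h5 hL0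
    have h7 := mul_le_mul_of_nonneg_left (abs_le.1 h4).1 (hαpos n).le
    rw [h3] at h1
    simp only [he]
    nlinarith
  -- convergence of the values
  obtain ⟨B, hB⟩ := hQ.exists_bound_of_continuousOn hfd.continuous.continuousOn
  have hVB : ∀ n, |f (η n)| ≤ B := fun n => hB _ (hηQ n)
  have hconv : ∃ c, Tendsto (fun n => f (η n)) atTop (nhds c) := by
    refine tendsto_of_no_upcrossings (s := Set.univ) dense_univ ?_
      ⟨B, eventually_map.2 (Eventually.of_forall fun n => (abs_le.1 (hVB n)).2)⟩
      ⟨-B, eventually_map.2 (Eventually.of_forall fun n => (abs_le.1 (hVB n)).1)⟩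
    rintro p - q - hpq ⟨hp, hq⟩
    obtain ⟨c, hpc, hcq, hc⟩ := hgap p q hpq
    have hcont : Continuous (fun x => ‖gradient f x‖ + |f x - c|) :=
      hgc.norm.add (hfd.continuous.sub continuous_const).abs
    obtain ⟨x0, hx0, hmin⟩ := hQ.exists_isMinOn ⟨_, hθQ 0⟩ hcont.continuousOn
    set κ := ‖gradient f x0‖ + |f x0 - c| with hκ
    have hκ0 : 0 < κ := by
      rcases eq_or_ne (f x0) c with h | h
      · have := hc x0 hx0 h
        have : 0 < ‖gradient f x0‖ := lt_of_le_of_ne (norm_nonneg _) this.symm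
        positivity
      · have : 0 < |f x0 - c| := abs_pos.2 (sub_ne_zero.2 h)
        positivity
    have hκm : ∀ x ∈ Q, κ ≤ ‖gradient f x‖ + |f x - c| := fun x hx => hmin hx
    set ρ := min (κ/2) (min (c - p) (q - c)) with hρ
    have hρ0 : 0 < ρ := lt_min (by linarith) (lt_min (by linarith) (by linarith))
    have hρ1 : ρ ≤ κ/2 := min_le_left _ _
    have hρ2 : ρ ≤ c - p := (min_le_right _ _).trans (min_le_left _ _)
    have hρ3 : ρ ≤ q - c := (min_le_right _ _).trans (min_le_right _ _)
    -- eventually, errors small and steps small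
    have hae : Tendsto (fun n => α n * e n) atTop (nhds 0) := by
      simpa using hα0.mul he0
    obtain ⟨N, hN⟩ := eventually_atTop.1 ((he0.eventually_lt_const
      (show 0 < (κ/2)^2 by positivity)).and (hae.eventually_lt_const hρ0))
    have hinv : ∀ n, N ≤ n → f (η n) ≤ c + ρ → f (η (n+1)) ≤ c + ρ := by
      intro n hn hle
      have h1 := hV n
      have hα := hαpos n
      rcases le_or_gt (f (η n)) c with h | h
      · have h2 : 0 ≤ α n * ‖gradient f (η n)‖ ^ 2 := by positivity
        have h3 := (hN n hn).2
        nlinarith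
      · have h2 := hκm _ (hηQ n)
        rw [abs_of_pos (by linarith)] at h2
        have h3 : κ/2 ≤ ‖gradient f (η n)‖ := by linarith
        have h4 : (κ/2)^2 ≤ ‖gradient f (η n)‖ ^ 2 :=
          pow_le_pow_left₀ (by positivity) h3 2
        have h5 := (hN n hn).1
        have h6 : 0 ≤ α n * (‖gradient f (η n)‖ ^ 2 - e n) :=
          mul_nonneg hα.le (by linarith)
        linarith
    obtain ⟨n, hn, hnN⟩ := (hp.and_eventually (eventually_ge_atTop N)).exists
    have hall : ∀ k, n ≤ k → f (η k) ≤ c + ρ := by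
      intro k hk
      induction k, hk using Nat.le_induction with
      | base => linarith
      | succ k hk ih => exact hinv k (by omega) ih
    obtain ⟨k, hk, hkn⟩ := (hq.and_eventually (eventually_ge_atTop n)).exists
    have := hall k hkn
    linarith
  have hmain : Tendsto (fun n => ‖gradient f (η n)‖) atTop (nhds 0) := by
    rw [tendsto_order]
    refine ⟨fun b hb => Eventually.of_forall fun n => hb.trans_le (norm_nonneg _), ?_⟩
    intro b hb
    by_contra hcon
    rw [not_eventually] at hcon
    set ε := b/2 with hε
    have hε0 : 0 < ε := by positivity
    set τ := ε / (L * G + 1) with hτ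
    have hLG : 0 ≤ L * G := by positivity
    have hτ0 : 0 < τ := by positivity
    have hτ1 : L * (G * τ) ≤ ε := by
      have : (L * G + 1) * τ = ε := by rw [hτ]; field_simp
      nlinarith
    obtain ⟨c, hc⟩ := hconv
    have hcau := hc.cauchySeq
    obtain ⟨N1, hN1⟩ := Metric.cauchySeq_iff.1 hcau (τ/2 * (ε^2/2)) (by positivity)
    obtain ⟨N, hN⟩ := eventually_atTop.1 ((he0.eventually_le_const
      (show 0 < ε^2/2 by positivity)).and (hα0.eventually_le_const (show 0 < τ/2 by positivity)))
    obtain ⟨n, hn, hnN⟩ := (hcon.and_eventually (eventually_ge_atTop (max N N1))).exists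
    have hnN0 : N ≤ n := (le_max_left _ _).trans hnN
    have hnN1 : N1 ≤ n := (le_max_right _ _).trans hnN
    have hgn : 2 * ε ≤ ‖gradient f (η n)‖ := by rw [hε]; linarith [not_lt.1 hn]
    obtain ⟨k, hnk, hl, hu⟩ := aux_window α γ hγs hαdiv τ hτ0 n (fun k hk => (hN k (by omega)).2)
    have key : ∀ j, n ≤ j → γ j - γ n ≤ τ → ‖η j - η n‖ ≤ G * (γ j - γ n) ∧
        f (η j) ≤ f (η n) - (γ j - γ n) * (ε^2/2) := by
      intro j hj
      induction j, hj using Nat.le_induction with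
      | base => intro _; simp
      | succ j hj ih =>
        intro hjτ
        rw [hγs] at hjτ ⊢
        have hα := hαpos j
        obtain ⟨h1, h2⟩ := ih (by linarith)
        constructor
        · have h3 := norm_add_le (η (j+1) - η j) (η j - η n)
          rw [sub_add_sub_cancel] at h3
          have := hstep j
          linarith
        · have h3 := hLd _ (hηQ n) _ (hηQ j)
          rw [norm_sub_rev (η n)] at h3
          have h4 : L * ‖η j - η n‖ ≤ L * (G * τ) := by
            refine mul_le_mul_of_nonneg_left (h1.trans ?_) hL0
            exact mul_le_mul_of_nonneg_left (by linarith) hG0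
          have h5 := norm_sub_norm_le (gradient f (η n)) (gradient f (η j))
          have h6 : ε ≤ ‖gradient f (η j)‖ := by linarith
          have h7 : ε^2 ≤ ‖gradient f (η j)‖^2 := pow_le_pow_left₀ hε0.le h6 2
          have h8 := hV j
          have h9 := (hN j (by omega)).1
          have h10 : α j * (ε^2/2) ≤ α j * (‖gradient f (η j)‖^2 - e j) :=
            mul_le_mul_of_nonneg_left (by linarith) hα.le
          linarith
    have h1 := (key k hnk hu).2
    have h2 := hN1 k (by omega) n hnN1
    rw [Real.dist_eq] at h2
    have h3 := (abs_lt.1 h2).1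
    have h4 : τ/2 * (ε^2/2) ≤ (γ k - γ n) * (ε^2/2) :=
      mul_le_mul_of_nonneg_right hl (by positivity)
    linarith
  rw [tendsto_zero_iff_norm_tendsto_zero]
  have hsum : Tendsto (fun n => ‖gradient f (η n)‖ + L * ‖θ n - η n‖) atTop (nhds 0) := by
    simpa using hmain.add (hclose.const_mul (L:ℝ))
  refine squeeze_zero (fun n => norm_nonneg _) (fun n => ?_) hsum
  have h1 := hLd _ (hθQ n) _ (hηQ n)
  have h2 := norm_sub_norm_le (gradient f (θ n)) (gradient f (η n))
  linarith

/-- Lemma 1.3 of the paper: under Assumptions 1.1, 1.2 and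
1.3, `lim_n ∇f(θ_n) = 0` almost surely on `Λ = {sup_n ‖θ_n‖ < ∞}`. -/
theorem stochastic_gradient_gradient_tendsto_zero
    {d : ℕ} (hd : 1 ≤ d)
    {Ω : Type} [MeasurableSpace Ω] (P : Measure Ω) [IsProbabilityMeasure P]
    (f : EuclideanSpace ℝ (Fin d) → ℝ)
    (hfd : Differentiable ℝ f)
    (hlip : LocallyLipschitz (fun x => gradient f x))
    (α : ℕ → ℝ) (hαpos : ∀ n, 0 < α n)
    (θ ξ : ℕ → Ω → EuclideanSpace ℝ (Fin d))
    (hrec : ∀ n ω, θ (n + 1) ω = θ n ω - α n • (gradient f (θ n ω) + ξ n ω))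
    -- Assumption 1.1
    (hα0 : Tendsto α atTop (nhds 0))
    (γ : ℕ → ℝ) (hγ : ∀ n, γ n = ∑ i ∈ Finset.range n, α i)
    (hαdiv : Tendsto γ atTop atTop)
    -- the interpolation index `a(n,t)`
    (a : ℕ → ℝ → ℕ)
    (ha : ∀ n t, 0 < t → a n t = sSup {k | n ≤ k ∧ γ k - γ n ≤ t})
    -- the event Λ
    (Λ : Set Ω) (hΛ : Λ = {ω | ∃ C, ∀ n, ‖θ n ω‖ ≤ C})
    -- Assumption 1.2
    (r : ℝ) (hr : 1 < r)
    (noise : ℕ → Ω → ℝ)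
    (hnoise : ∀ n ω, noise n ω =
      ⨆ k ∈ Set.Ico n (a n 1), ‖∑ i ∈ Finset.Icc n k, (α i * γ i ^ r) • ξ i ω‖)
    (hA12 : ∀ᵐ ω ∂P, ω ∈ Λ → IsBoundedUnder (· ≤ ·) atTop (fun n => noise n ω))
    -- Assumption 1.3 (Łojasiewicz-type gradient inequality)
    (hLoj : ∀ Q : Set (EuclideanSpace ℝ (Fin d)), IsCompact Q → ∀ b ∈ f '' Q,
      ∃ δ μ M : ℝ, δ ∈ Set.Ioc (0 : ℝ) 1 ∧ μ ∈ Set.Ioc (1 : ℝ) 2 ∧ 1 ≤ M ∧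
        ∀ x ∈ Q, |f x - b| ≤ δ → |f x - b| ≤ M * ‖gradient f x‖ ^ μ) :
    ∀ᵐ ω ∂P, ω ∈ Λ →
      Tendsto (fun n => gradient f (θ n ω)) atTop (nhds 0) := by
  have hγs : ∀ n, γ (n+1) = γ n + α n := fun n => by
    rw [hγ, hγ, Finset.sum_range_succ]
  have hγpos : ∀ n, 1 ≤ n → 0 < γ n := fun n hn => by
    rw [hγ]
    exact Finset.sum_pos (fun i _ => hαpos i) ⟨0, by simp; omega⟩
  have hmono : Monotone γ := monotone_nat_of_le_succ (fun n => by
    rw [hγs]; linarith [hαpos n])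
  filter_upwards [hA12] with ω hω hωΛ
  obtain ⟨K0, hK0⟩ := hω hωΛ
  rw [hΛ] at hωΛ
  obtain ⟨C, hC⟩ := hωΛ
  set K := max K0 0 with hK
  have hKn : 0 ≤ K := le_max_right _ _
  set X : ℕ → EuclideanSpace ℝ (Fin d) := fun k => ∑ i ∈ Finset.range k, α i • ξ i ω with hX
  set Y : ℕ → EuclideanSpace ℝ (Fin d) :=
    fun k => ∑ i ∈ Finset.range k, (α i * γ i ^ r) • ξ i ω with hY
  have hYb : ∀ᶠ n in atTop, ∀ j, n ≤ j → γ j - γ n ≤ 1 → ‖Y j - Y n‖ ≤ K := by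
    filter_upwards [eventually_map.1 hK0] with n hn j hj hj1
    rcases hj.eq_or_lt with rfl | hlt
    · simpa using hKn
    · obtain ⟨k, rfl⟩ : ∃ k, j = k + 1 := ⟨j - 1, by omega⟩
      have hbdd : BddAbove {k | n ≤ k ∧ γ k - γ n ≤ 1} := by
        obtain ⟨M, hM⟩ := (hαdiv.eventually_gt_atTop (γ n + 1)).exists
        refine ⟨M, fun k hk => ?_⟩
        by_contra hcon
        have := hmono (not_le.1 hcon).le
        linarith [hk.2]
      have hle : k + 1 ≤ a n 1 := by
        rw [ha n 1 one_pos]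
        exact le_csSup hbdd ⟨hj, hj1⟩
      have h := aux_isup n (a n 1)
        (fun k => ‖∑ i ∈ Finset.Icc n k, (α i * γ i ^ r) • ξ i ω‖) (fun k => norm_nonneg _) k
        ⟨by omega, by omega⟩
      rw [← hnoise] at h
      have e : Y (k+1) - Y n = ∑ i ∈ Finset.Icc n k, (α i * γ i ^ r) • ξ i ω := by
        simp only [hY]
        rw [← Finset.sum_Ico_eq_sub _ hj]
        rfl
      rw [e]
      exact h.trans (hn.trans (le_max_left _ _))
  have hXb : ∀ᶠ n in atTop, ∀ k, n ≤ k → γ k - γ n ≤ 1 → ‖X k - X n‖ ≤ K * γ n ^ (-r) := by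
    filter_upwards [hYb, eventually_ge_atTop 1] with n hn hn1 k hk hk1
    refine aux_abel X Y (fun i => γ i ^ (-r)) n k hk K ?_ ?_ ?_ ?_
    · intro i hi
      have := hγpos i (by omega)
      exact Real.rpow_le_rpow_of_nonpos this (hmono (Nat.le_succ i)) (by linarith)
    · intro i hi
      have := hγpos i (by omega)
      positivity
    · intro i hi
      have := hγpos i (by omega)
      simp only [hX, hY, Finset.sum_range_succ, add_sub_cancel_left, smul_smul]
      congr 1
      rw [Real.rpow_neg this.le]
      have : γ i ^ r ≠ 0 := by positivity
      field_simp
    · intro j hj hjk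
      exact hn j hj (by linarith [hmono hjk])
  obtain ⟨X', hX'⟩ := cauchySeq_tendsto_of_complete
    (aux_cauchy α γ hαpos hα0 hγs hαdiv r hr X K hKn hXb)
  have hD0 : Tendsto (fun n => X n - X') atTop (nhds 0) := by
    simpa using hX'.sub_const X'
  have hDn : Tendsto (fun n => ‖X n - X'‖) atTop (nhds 0) := by simpa using hD0.norm
  obtain ⟨D, hD⟩ := hDn.bddAbove_range
  have hDb : ∀ n, ‖X n - X'‖ ≤ D := fun n => hD ⟨n, rfl⟩
  have hD00 : 0 ≤ D := (norm_nonneg _).trans (hDb 0)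
  refine aux_core f hfd hlip α γ hαpos hα0 hγs hαdiv (fun n => θ n ω)
    (fun n => θ n ω + (X n - X')) (C + D) (fun n => by linarith [hC n]) ?_ ?_ ?_ ?_
  · intro n
    exact (norm_add_le _ _).trans (add_le_add (hC n) (hDb n))
  · intro n
    simp only [hX, Finset.sum_range_succ]
    rw [hrec]
    module
  · simpa [norm_sub_rev] using hDn
  · exact aux_gap f (fun x => ‖gradient f x‖) _ (hLoj _ (isCompact_closedBall _ _))
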